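/- arXiv:1804.11052 — 4 statements merged into one kernel-verified Lean document; each statement's English description precedes it below -/
import Mathlib

section
/- Let DES = (R, S, Σ_st, F, F_int) be a fully-typed data exchange setting. If DES is consistent, then DES is key-covered; that is, for every pair of contentious stds σ_1, σ_2 in Σ_st, for every valid instance I of R, and for every valuation ν of the variables x_1 ∪ y_1 ∪ x_2 ∪ y_2 such that all atoms of φ_1 and of φ_2 are mapped by ν to facts of I and ν(x_1) = ν(x_2), it holds that ν^{F_int}(o_1) = ν^{F_int}(o_2). -/
namespace RdfDE

/-- The RDF domain: a countably infinite domain partitioned into IRIs, literals and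
blank nodes, with a distinguished infinite subset of null literals. -/
structure RDFDom (Dom : Type) where
  Iri : Set Dom
  Lit : Set Dom
  Blank : Set Dom
  NullLit : Set Dom
  cover : Iri ∪ Lit ∪ Blank = Set.univ
  disjIL : Disjoint Iri Lit
  disjIB : Disjoint Iri Blank
  disjLB : Disjoint Lit Blank
  nullSub : NullLit ⊆ Lit
  infIri : Iri.Infinite
  infLit : Lit.Infinite
  infBlank : Blank.Infinite
  infNull : NullLit.Infinite

/-- Multiplicities 1, ?, *, +. -/
inductive Mult : Type
  | one | opt | star | plus

/-- A triple constraint `p :: T'^μ`; `target = none` stands for `Lit`. -/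
structure TC (Dom Shape : Type) where
  prop : Dom
  target : Option Shape
  mult : Mult

/-- A ShEx schema over the (finite) type `Shape` of shape names. -/
structure ShEx (Dom Shape : Type) (D : RDFDom Dom) where
  δ : Shape → Set (TC Dom Shape)
  finite : ∀ T, (δ T).Finite
  propIri : ∀ T : Shape, ∀ tc ∈ δ T, tc.prop ∈ D.Iri
  uniqueProp : ∀ T : Shape, ∀ tc1 ∈ δ T, ∀ tc2 ∈ δ T, tc1.prop = tc2.prop → tc1 = tc2

/-- Facts of the target signature `G_T`: a ternary `Triple`, unary `Lit`,
and a unary relation for each shape name. -/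
inductive Fact (Dom Shape : Type) : Type
  | triple (s p o : Dom)
  | lit (n : Dom)
  | shape (T : Shape) (n : Dom)

/-- The unary fact `T(n)` where `T ∈ 𝒯 ∪ {Lit}`. -/
def factOf {Dom Shape : Type} (t : Option Shape) (n : Dom) : Fact Dom Shape :=
  match t with
  | none => .lit n
  | some T => .shape T n

/-- Cardinality constraint imposed by a multiplicity on the set of objects. -/
def multOk {Dom : Type} (μ : Mult) (K : Set Dom) : Prop :=
  match μ with
  | .one => ∃! y, y ∈ K
  | .opt => K.Subsingleton
  | .star => True
  | .plus => K.Nonempty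

/-- `J` satisfies every sentence of `Σ_S`: the sort sentences, and for each
triple constraint the sentences `tc`, `mult≥1` (if μ ∈ {1,+}) and `mult≤1` (if μ ∈ {1,?}). -/
def satSigma {Dom Shape : Type} (D : RDFDom Dom) (S : ShEx Dom Shape D)
    (J : Set (Fact Dom Shape)) : Prop :=
  (∀ (T : Shape) (n : Dom), Fact.shape T n ∈ J → n ∈ D.Iri ∪ D.Blank) ∧
  (∀ n : Dom, Fact.lit n ∈ J → n ∈ D.Lit) ∧
  (∀ T : Shape, ∀ tc ∈ S.δ T,
    (∀ x y : Dom, Fact.shape T x ∈ J → Fact.triple x tc.prop y ∈ J →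
      factOf tc.target y ∈ J) ∧
    ((tc.mult = Mult.one ∨ tc.mult = Mult.plus) →
      ∀ x : Dom, Fact.shape T x ∈ J → ∃ y : Dom, Fact.triple x tc.prop y ∈ J) ∧
    ((tc.mult = Mult.one ∨ tc.mult = Mult.opt) →
      ∀ x y z : Dom, Fact.shape T x ∈ J → Fact.triple x tc.prop y ∈ J →
        Fact.triple x tc.prop z ∈ J → y = z))

/-- Nodes of a graph: values occurring in subject or object position. -/
def nodes {Dom : Type} (G : Set (Dom × Dom × Dom)) : Set Dom :=
  {n | ∃ t ∈ G, t.1 = n ∨ t.2.2 = n}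

/-- `G` is an RDF graph: triples lie in `(Iri ∪ Blank) × Iri × (Iri ∪ Blank ∪ Lit)`. -/
def isRDFGraph {Dom : Type} (D : RDFDom Dom) (G : Set (Dom × Dom × Dom)) : Prop :=
  ∀ t ∈ G, t.1 ∈ D.Iri ∪ D.Blank ∧ t.2.1 ∈ D.Iri ∧ t.2.2 ∈ D.Iri ∪ D.Blank ∪ D.Lit

/-- rdf-to-inst(G, typing). -/
def rdfToInst {Dom Shape : Type} (G : Set (Dom × Dom × Dom))
    (typing : Dom → Set (Option Shape)) : Set (Fact Dom Shape) :=
  {F | (∃ t ∈ G, F = Fact.triple t.1 t.2.1 t.2.2) ∨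
       (∃ n ∈ nodes G, ∃ T ∈ typing n, F = factOf T n)}

/-- The graph component of inst-to-rdf(I). -/
def instGraph {Dom Shape : Type} (I : Set (Fact Dom Shape)) : Set (Dom × Dom × Dom) :=
  {t | Fact.triple t.1 t.2.1 t.2.2 ∈ I}

/-- The typing component of inst-to-rdf(I) (empty off the nodes of the graph). -/
def instTyping {Dom Shape : Type} (I : Set (Fact Dom Shape)) : Dom → Set (Option Shape) :=
  fun n => {T | n ∈ nodes (instGraph I) ∧ factOf T n ∈ I}

/-- `(G, typing)` is correctly typed w.r.t. the schema `S`. -/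
def correctlyTyped {Dom Shape : Type} (D : RDFDom Dom) (S : ShEx Dom Shape D)
    (G : Set (Dom × Dom × Dom)) (typing : Dom → Set (Option Shape)) : Prop :=
  ∀ n ∈ nodes G,
    ((none : Option Shape) ∈ typing n → n ∈ D.Lit) ∧
    (∀ T : Shape, some T ∈ typing n →
      n ∈ D.Iri ∪ D.Blank ∧
      ∀ tc ∈ S.δ T,
        (∀ m : Dom, (n, tc.prop, m) ∈ G → tc.target ∈ typing m) ∧
        multOk tc.mult {m : Dom | (n, tc.prop, m) ∈ G})

/-- A fact `R(t)` of a relational instance. -/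
structure RelFact (Dom RSym : Type) (ar : RSym → ℕ) where
  sym : RSym
  args : Fin (ar sym) → Dom

/-- A functional dependency `R : X → Y`. -/
structure Fd (RSym : Type) (ar : RSym → ℕ) where
  sym : RSym
  X : Set (Fin (ar sym))
  Y : Set (Fin (ar sym))

/-- The fd `φ` holds in the relational instance `I`. -/
def fdHolds {Dom RSym : Type} {ar : RSym → ℕ} (I : Set (RelFact Dom RSym ar))
    (φ : Fd RSym ar) : Prop :=
  ∀ t1 t2 : Fin (ar φ.sym) → Dom,
    (⟨φ.sym, t1⟩ : RelFact Dom RSym ar) ∈ I →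
    (⟨φ.sym, t2⟩ : RelFact Dom RSym ar) ∈ I →
    (∀ i ∈ φ.X, t1 i = t2 i) → ∀ j ∈ φ.Y, t1 j = t2 j

/-- A valid instance of the relational schema: finite, over `Lit \ NullLit`,
satisfying all functional dependencies. -/
def validInst {Dom RSym : Type} {ar : RSym → ℕ} (D : RDFDom Dom)
    (fds : Set (Fd RSym ar)) (I : Set (RelFact Dom RSym ar)) : Prop :=
  I.Finite ∧ (∀ F ∈ I, ∀ i, F.args i ∈ D.Lit \ D.NullLit) ∧ ∀ φ ∈ fds, fdHolds I φ

/-- A relational atom with variables in `V`. -/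
structure Atom (RSym : Type) (ar : RSym → ℕ) (V : Type) where
  sym : RSym
  args : Fin (ar sym) → V

/-- The object term of an std: either a variable or a functional term `g(z)`. -/
inductive Obj (FSym : Type) (far : FSym → ℕ) (V : Type) : Type
  | var (v : V)
  | app (g : FSym) (z : Fin (far g) → V)

/-- A fully-typed source-to-target tgd
`∀x,y. φ(x,y) ⇒ Triple(f(x), p, o) ∧ T_s(f(x)) ∧ T_o(o)`, where `x` has length
`far f`, `y` has length `ny`, and the body uses exactly the variables `x ∪ y`. -/
structure Std (Dom RSym FSym : Type) (ar : RSym → ℕ) (far : FSym → ℕ) where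
  f : FSym
  ny : ℕ
  body : Set (Atom RSym ar (Fin (far f) ⊕ Fin ny))
  bodyFinite : body.Finite
  covers : ∀ v : Fin (far f) ⊕ Fin ny, ∃ a ∈ body, ∃ i, a.args i = v
  p : Dom
  obj : Obj FSym far (Fin (far f) ⊕ Fin ny)

/-- The variables `x ∪ y` of an std. -/
abbrev Std.Var {Dom RSym FSym : Type} {ar : RSym → ℕ} {far : FSym → ℕ}
    (σ : Std Dom RSym FSym ar far) : Type :=
  Fin (far σ.f) ⊕ Fin σ.ny

/-- `ν^{F_int}(o)`. -/
def Obj.eval {Dom FSym : Type} {far : FSym → ℕ} {V : Type}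
    (Fint : (f : FSym) → (Fin (far f) → Dom) → Dom) (ν : V → Dom) :
    Obj FSym far V → Dom
  | .var v => ν v
  | .app g z => Fint g (fun i => ν (z i))

/-- The type `T_o` of the object of an std: `Lit` (i.e. `none`) for a variable,
`type(g)` for a functional term `g(z)`. -/
def Std.objType {Dom RSym FSym Shape : Type} {ar : RSym → ℕ} {far : FSym → ℕ}
    (ftype : FSym → Shape) (σ : Std Dom RSym FSym ar far) : Option Shape :=
  match σ.obj with
  | .var _ => none
  | .app g _ => some (ftype g)

/-- The valuation `ν` maps every atom of the body of `σ` to a fact of `I`. -/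
def bodyHolds {Dom RSym FSym : Type} {ar : RSym → ℕ} {far : FSym → ℕ}
    (σ : Std Dom RSym FSym ar far) (ν : σ.Var → Dom)
    (I : Set (RelFact Dom RSym ar)) : Prop :=
  ∀ a ∈ σ.body, (⟨a.sym, fun i => ν (a.args i)⟩ : RelFact Dom RSym ar) ∈ I

/-- `I ∪ J ∪ F_int ⊨ σ`. -/
def stdSat {Dom RSym FSym Shape : Type} {ar : RSym → ℕ} {far : FSym → ℕ}
    (Fint : (f : FSym) → (Fin (far f) → Dom) → Dom) (ftype : FSym → Shape)
    (σ : Std Dom RSym FSym ar far) (I : Set (RelFact Dom RSym ar))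
    (J : Set (Fact Dom Shape)) : Prop :=
  ∀ ν : σ.Var → Dom, bodyHolds σ ν I →
    Fact.triple (Fint σ.f fun i => ν (Sum.inl i)) σ.p (Obj.eval Fint ν σ.obj) ∈ J ∧
    Fact.shape (ftype σ.f) (Fint σ.f fun i => ν (Sum.inl i)) ∈ J ∧
    factOf (σ.objType ftype) (Obj.eval Fint ν σ.obj) ∈ J

/-- The std conforms to the schema `S`: if `δ(T_s)` contains a triple constraint
on the property `p` of the std then its target is `T_o`. -/
def Std.conforms {Dom RSym FSym Shape : Type} {ar : RSym → ℕ} {far : FSym → ℕ}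
    (D : RDFDom Dom) (S : ShEx Dom Shape D) (ftype : FSym → Shape)
    (σ : Std Dom RSym FSym ar far) : Prop :=
  ∀ tc ∈ S.δ (ftype σ.f), tc.prop = σ.p → tc.target = σ.objType ftype

/-- A fully-typed data exchange setting `(R, S, Σ_st, F, F_int)`. -/
structure DES (Dom RSym FSym Shape : Type) (ar : RSym → ℕ) (far : FSym → ℕ) where
  D : RDFDom Dom
  shex : ShEx Dom Shape D
  fds : Set (Fd RSym ar)
  fdsFin : fds.Finite
  ftype : FSym → Shape
  Fint : (f : FSym) → (Fin (far f) → Dom) → Dom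
  FintIri : ∀ f args, Fint f args ∈ D.Iri
  FintInj : ∀ f, Function.Injective (Fint f)
  FintDisj : ∀ f g, f ≠ g → ∀ a b, Fint f a ≠ Fint g b
  stds : Set (Std Dom RSym FSym ar far)
  stdsFin : stds.Finite
  stP : ∀ σ ∈ stds, σ.p ∈ D.Iri
  stConf : ∀ σ ∈ stds, σ.conforms D shex ftype

variable {Dom RSym FSym Shape : Type} {ar : RSym → ℕ} {far : FSym → ℕ}

/-- `σ1, σ2` are a contentious pair of stds of the setting. -/
def contentious (des : DES Dom RSym FSym Shape ar far)
    (σ1 σ2 : Std Dom RSym FSym ar far) : Prop :=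
  σ1 ∈ des.stds ∧ σ2 ∈ des.stds ∧ σ1.f = σ2.f ∧ σ1.p = σ2.p ∧
  ∃ tc ∈ des.shex.δ (des.ftype σ1.f), tc.prop = σ1.p ∧
    tc.target = σ1.objType des.ftype ∧ (tc.mult = Mult.one ∨ tc.mult = Mult.opt)

/-- `σ1, σ2` are functionally overlapping. -/
def funOverlap (des : DES Dom RSym FSym Shape ar far)
    (σ1 σ2 : Std Dom RSym FSym ar far) : Prop :=
  ∀ I : Set (RelFact Dom RSym ar), validInst des.D des.fds I →
    ∀ (ν1 : σ1.Var → Dom) (ν2 : σ2.Var → Dom),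
      bodyHolds σ1 ν1 I → bodyHolds σ2 ν2 I →
      HEq (fun i : Fin (far σ1.f) => ν1 (Sum.inl i))
          (fun i : Fin (far σ2.f) => ν2 (Sum.inl i)) →
      Obj.eval des.Fint ν1 σ1.obj = Obj.eval des.Fint ν2 σ2.obj

/-- The setting is key-covered. -/
def keyCovered (des : DES Dom RSym FSym Shape ar far) : Prop :=
  ∀ σ1 σ2, contentious des σ1 σ2 → funOverlap des σ1 σ2

/-- `J` is a solution for the valid source instance `I`. -/
def isSolution (des : DES Dom RSym FSym Shape ar far)
    (I : Set (RelFact Dom RSym ar)) (J : Set (Fact Dom Shape)) : Prop :=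
  (∀ σ ∈ des.stds, stdSat des.Fint des.ftype σ I J) ∧ satSigma des.D des.shex J

/-- The setting is consistent: every valid source instance has a solution. -/
def consistent (des : DES Dom RSym FSym Shape ar far) : Prop :=
  ∀ I : Set (RelFact Dom RSym ar), validInst des.D des.fds I →
    ∃ J : Set (Fact Dom Shape), isSolution des I J

/-- The canonical target instance `J_0` of `I`. -/
def canonical (des : DES Dom RSym FSym Shape ar far)
    (I : Set (RelFact Dom RSym ar)) : Set (Fact Dom Shape) :=
  {F | ∃ σ ∈ des.stds, ∃ ν : σ.Var → Dom, bodyHolds σ ν I ∧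
    (F = Fact.triple (des.Fint σ.f fun i => ν (Sum.inl i)) σ.p (Obj.eval des.Fint ν σ.obj) ∨
     F = Fact.shape (des.ftype σ.f) (des.Fint σ.f fun i => ν (Sum.inl i)) ∨
     F = factOf (σ.objType des.ftype) (Obj.eval des.Fint ν σ.obj))}

/-- The vector `z` of variables of the object term of an std (of length 1 if the
object is a variable). -/
def Std.objVars (σ : Std Dom RSym FSym ar far) : Σ n : ℕ, Fin n → σ.Var :=
  match σ.obj with
  | .var v => ⟨1, fun _ => v⟩
  | .app g z => ⟨far g, z⟩

/-- The view `V_σ(I)` as a set of pairs of tuples (encoded as lists):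
the values of `x` and the values of `z`. -/
def viewRel (σ : Std Dom RSym FSym ar far) (I : Set (RelFact Dom RSym ar)) :
    Set (List Dom × List Dom) :=
  {ab | ∃ ν : σ.Var → Dom, bodyHolds σ ν I ∧
        ab.1 = List.ofFn (fun i : Fin (far σ.f) => ν (Sum.inl i)) ∧
        ab.2 = List.ofFn (fun j => ν (σ.objVars.2 j))}

/-- The object terms of `σ1` and `σ2` are either both variables or both functional
terms over the same function symbol. -/
def objMatch (σ1 σ2 : Std Dom RSym FSym ar far) : Prop :=
  (∃ v1 v2, σ1.obj = Obj.var v1 ∧ σ2.obj = Obj.var v2) ∨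
  (∃ g z1 z2, σ1.obj = Obj.app g z1 ∧ σ2.obj = Obj.app g z2)

/-- `(T, p)` is a pair for which a fresh value `b^{T,p}` is needed:
`δ(T)` has a constraint on `p` with multiplicity in `{1, +}`. -/
def relevantBP {Dom Shape : Type} {D : RDFDom Dom} (S : ShEx Dom Shape D)
    (T : Shape) (p : Dom) : Prop :=
  ∃ tc ∈ S.δ T, tc.prop = p ∧ (tc.mult = Mult.one ∨ tc.mult = Mult.plus)

/-- `J_1 = { T'(b^{T,p}) | p :: T'^μ ∈ δ(T), μ ∈ {1,+} }`. -/
def J1set {Dom Shape : Type} {D : RDFDom Dom} (S : ShEx Dom Shape D)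
    (b : Shape → Dom → Dom) : Set (Fact Dom Shape) :=
  {F | ∃ T : Shape, ∃ tc ∈ S.δ T, (tc.mult = Mult.one ∨ tc.mult = Mult.plus) ∧
       F = factOf tc.target (b T tc.prop)}

/-- `J_2 = { Triple(b^{T,p}, q, b^{T_1,q}) | T_1(b^{T,p}) ∈ J_1, q :: T_2^μ ∈ δ(T_1), μ ∈ {1,+} }`. -/
def J2set {Dom Shape : Type} {D : RDFDom Dom} (S : ShEx Dom Shape D)
    (b : Shape → Dom → Dom) : Set (Fact Dom Shape) :=
  {F | ∃ (T1 : Shape) (n : Dom), Fact.shape T1 n ∈ J1set S b ∧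
       ∃ tc2 ∈ S.δ T1, (tc2.mult = Mult.one ∨ tc2.mult = Mult.plus) ∧
       F = Fact.triple n tc2.prop (b T1 tc2.prop)}

/-- `J_3 = { Triple(a, p, b^{T,p}) | T(a) ∈ J, p :: T'^μ ∈ δ(T), μ ∈ {1,+},
no Triple(a, p, b') in J }`. -/
def J3set {Dom Shape : Type} {D : RDFDom Dom} (S : ShEx Dom Shape D)
    (b : Shape → Dom → Dom) (J : Set (Fact Dom Shape)) : Set (Fact Dom Shape) :=
  {F | ∃ (T : Shape) (n : Dom), Fact.shape T n ∈ J ∧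
       ∃ tc ∈ S.δ T, (tc.mult = Mult.one ∨ tc.mult = Mult.plus) ∧
       (¬ ∃ y : Dom, Fact.triple n tc.prop y ∈ J) ∧
       F = Fact.triple n tc.prop (b T tc.prop)}

/-- The value `d` occurs in the fact `F`. -/
def occursIn {Dom Shape : Type} (d : Dom) : Fact Dom Shape → Prop
  | .triple s p o => d = s ∨ d = p ∨ d = o
  | .lit n => d = n
  | .shape _ n => d = n

variable {Dom RSym FSym Shape : Type} {ar : RSym → ℕ} {far : FSym → ℕ}

variable {des : DES Dom RSym FSym Shape ar far} {I : Set (RelFact Dom RSym ar)}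
  {J : Set (Fact Dom Shape)}

theorem satSigma.object_unique {D : RDFDom Dom} {S : ShEx Dom Shape D} (hJ : satSigma D S J)
    {T : Shape} {tc : TC Dom Shape} (htc : tc ∈ S.δ T)
    (hmult : tc.mult = Mult.one ∨ tc.mult = Mult.opt) {x y z : Dom}
    (hx : Fact.shape T x ∈ J) (hy : Fact.triple x tc.prop y ∈ J)
    (hz : Fact.triple x tc.prop z ∈ J) : y = z :=
  (hJ.2.2 T tc htc).2.2 hmult x y z hx hy hz

section Solution

variable {σ : Std Dom RSym FSym ar far} {ν : σ.Var → Dom}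

theorem isSolution.triple_mem (hJ : isSolution des I J) (hσ : σ ∈ des.stds)
    (hν : bodyHolds σ ν I) :
    Fact.triple (des.Fint σ.f fun i => ν (Sum.inl i)) σ.p (σ.obj.eval des.Fint ν) ∈ J :=
  (hJ.1 σ hσ ν hν).1

theorem isSolution.subject_shape_mem (hJ : isSolution des I J) (hσ : σ ∈ des.stds)
    (hν : bodyHolds σ ν I) :
    Fact.shape (des.ftype σ.f) (des.Fint σ.f fun i => ν (Sum.inl i)) ∈ J :=
  (hJ.1 σ hσ ν hν).2.1

end Solution

theorem contentious.eval_obj_eq {σ₁ σ₂ : Std Dom RSym FSym ar far}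
    (hσ : contentious des σ₁ σ₂) (hJ : isSolution des I J)
    {ν₁ : σ₁.Var → Dom} {ν₂ : σ₂.Var → Dom}
    (hν₁ : bodyHolds σ₁ ν₁ I) (hν₂ : bodyHolds σ₂ ν₂ I)
    (hx : HEq (fun i : Fin (far σ₁.f) => ν₁ (Sum.inl i))
      (fun i : Fin (far σ₂.f) => ν₂ (Sum.inl i))) :
    σ₁.obj.eval des.Fint ν₁ = σ₂.obj.eval des.Fint ν₂ := by
  obtain ⟨hσ₁, hσ₂, hf, hp, tc, htc, hprop, -, hmult⟩ := hσ
  have hsubject : (des.Fint σ₁.f fun i => ν₁ (Sum.inl i)) =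
      des.Fint σ₂.f fun i => ν₂ (Sum.inl i) :=
    congr_heq (congr_arg_heq des.Fint hf) hx
  have htriple₁ := hJ.triple_mem hσ₁ hν₁
  have htriple₂ := hJ.triple_mem hσ₂ hν₂
  rw [← hprop] at htriple₁
  rw [← hsubject, ← hp, ← hprop] at htriple₂
  exact hJ.2.object_unique htc hmult (hJ.subject_shape_mem hσ₁ hν₁) htriple₁ htriple₂

theorem stmt2_general (hcons : consistent des) : keyCovered des := by
  intro σ₁ σ₂ hσ I hI ν₁ ν₂ hν₁ hν₂ hx
  obtain ⟨J, hJ⟩ := hcons I hI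
  exact hσ.eval_obj_eq hJ hν₁ hν₂ hx

theorem stmt2 [Countable Dom] [Finite RSym] [Finite FSym] [Finite Shape]
    (des : DES Dom RSym FSym Shape ar far)
    (hcons : consistent des) : keyCovered des :=
  stmt2_general hcons

end RdfDE
end

section
/- Let DES = (R, S, Σ_st, F, F_int) be a fully-typed data exchange setting. If DES is key-covered, then DES is consistent; that is, for every valid instance I of R there exists an instance J of G_T such that I ∪ J ∪ F_int ⊨ σ for every σ ∈ Σ_st and J satisfies every sentence of Σ_S. -/
namespace RdfDE

variable {Dom RSym FSym Shape : Type} {ar : RSym → ℕ} {far : FSym → ℕ}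

variable {Dom RSym FSym Shape : Type} {ar : RSym → ℕ} {far : FSym → ℕ}

/-!
The canonical instance of a source instance already satisfies every sentence of `Σ_S` except
`mult≥1`: the ranges of the interpreted functions are disjoint, so every typed node has a unique
type, which gives `tc` by conformance, and key coverage gives `mult≤1`. It remains to supply the
missing mandatory triples without violating anything else. Since distinct types may carry
contradictory constraints, we adjoin one new blank node per shape and one literal, and the object of
a missing triple is the one among them that has the target type of the constraint; thus `b^{T,p}`
depends only on that target. A node receives such a triple only if it had none for that property,
so `mult≤1` survives.
-/

theorem factOf_inj {t t' : Option Shape} {n n' : Dom} :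
    factOf t n = factOf t' n' ↔ t = t' ∧ n = n' := by
  cases t <;> cases t' <;> simp [factOf]

theorem triple_ne_factOf {s p o : Dom} {t : Option Shape} {n : Dom} :
    Fact.triple s p o ≠ factOf t n := by
  cases t <;> simp [factOf]

/-- The nodes about which the sentences `tc`, `mult≥1` and `mult≤1` say something in `J`: those
that carry a shape or are the subject of a triple. -/
def subjects (J : Set (Fact Dom Shape)) : Set Dom :=
  {x | (∃ T, Fact.shape T x ∈ J) ∨ ∃ p y, Fact.triple x p y ∈ J}

/-- A pre-model of `S`: an instance satisfying every sentence of `Σ_S` except possibly `mult≥1`, and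
in which no node has two shapes. These are the instances that can be completed to models by adding
the missing mandatory triples. -/
structure IsPreModel {D : RDFDom Dom} (S : ShEx Dom Shape D) (J : Set (Fact Dom Shape)) :
    Prop where
  shape_sort : ∀ {T n}, Fact.shape T n ∈ J → n ∈ D.Iri ∪ D.Blank
  lit_sort : ∀ {n}, Fact.lit n ∈ J → n ∈ D.Lit
  shape_unique : ∀ {T T' n}, Fact.shape T n ∈ J → Fact.shape T' n ∈ J → T = T'
  target_mem : ∀ {T tc x y}, tc ∈ S.δ T → Fact.shape T x ∈ J → Fact.triple x tc.prop y ∈ J →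
    factOf tc.target y ∈ J
  object_unique : ∀ {T tc x y z}, tc ∈ S.δ T → (tc.mult = Mult.one ∨ tc.mult = Mult.opt) →
    Fact.shape T x ∈ J → Fact.triple x tc.prop y ∈ J → Fact.triple x tc.prop z ∈ J → y = z

section Union

variable {D : RDFDom Dom} {S : ShEx Dom Shape D} {J N : Set (Fact Dom Shape)}

theorem shape_mem_union_left_iff (hJN : Disjoint (subjects J) (subjects N)) {x : Dom}
    (hx : x ∈ subjects J) {T : Shape} : Fact.shape T x ∈ J ∪ N ↔ Fact.shape T x ∈ J :=
  or_iff_left fun h => Set.disjoint_left.1 hJN hx (Or.inl ⟨T, h⟩)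

theorem triple_mem_union_left_iff (hJN : Disjoint (subjects J) (subjects N)) {x : Dom}
    (hx : x ∈ subjects J) {p y : Dom} : Fact.triple x p y ∈ J ∪ N ↔ Fact.triple x p y ∈ J :=
  or_iff_left fun h => Set.disjoint_left.1 hJN hx (Or.inr ⟨p, y, h⟩)

theorem shape_mem_union_right_iff (hJN : Disjoint (subjects J) (subjects N)) {x : Dom}
    (hx : x ∈ subjects N) {T : Shape} : Fact.shape T x ∈ J ∪ N ↔ Fact.shape T x ∈ N := by
  rw [Set.union_comm, shape_mem_union_left_iff hJN.symm hx]

theorem triple_mem_union_right_iff (hJN : Disjoint (subjects J) (subjects N)) {x : Dom}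
    (hx : x ∈ subjects N) {p y : Dom} : Fact.triple x p y ∈ J ∪ N ↔ Fact.triple x p y ∈ N := by
  rw [Set.union_comm, triple_mem_union_left_iff hJN.symm hx]

theorem IsPreModel.union (hJ : IsPreModel S J) (hN : IsPreModel S N)
    (hJN : Disjoint (subjects J) (subjects N)) : IsPreModel S (J ∪ N) where
  shape_sort h := h.elim hJ.shape_sort hN.shape_sort
  lit_sort h := h.elim hJ.lit_sort hN.lit_sort
  shape_unique := by
    rintro T T' n (hT | hT) hT'
    · exact hJ.shape_unique hT ((shape_mem_union_left_iff hJN (Or.inl ⟨T, hT⟩)).1 hT')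
    · exact hN.shape_unique hT ((shape_mem_union_right_iff hJN (Or.inl ⟨T, hT⟩)).1 hT')
  target_mem := by
    rintro T tc x y htc (hx | hx) hxy
    · rw [triple_mem_union_left_iff hJN (Or.inl ⟨T, hx⟩)] at hxy
      exact Or.inl (hJ.target_mem htc hx hxy)
    · rw [triple_mem_union_right_iff hJN (Or.inl ⟨T, hx⟩)] at hxy
      exact Or.inr (hN.target_mem htc hx hxy)
  object_unique := by
    rintro T tc x y z htc hμ (hx | hx) hxy hxz
    · rw [triple_mem_union_left_iff hJN (Or.inl ⟨T, hx⟩)] at hxy hxz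
      exact hJ.object_unique htc hμ hx hxy hxz
    · rw [triple_mem_union_right_iff hJN (Or.inl ⟨T, hx⟩)] at hxy hxz
      exact hN.object_unique htc hμ hx hxy hxz

end Union

section MandatoryTriples

variable {D : RDFDom Dom} {S : ShEx Dom Shape D} {b : Shape → Dom → Dom}
  {J : Set (Fact Dom Shape)}

theorem factOf_notMem_J3set {t : Option Shape} {n : Dom} : factOf t n ∉ J3set S b J := by
  rintro ⟨T, m, -, tc, -, -, -, h⟩
  exact triple_ne_factOf h.symm

theorem factOf_mem_union_J3set_iff {t : Option Shape} {n : Dom} :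
    factOf t n ∈ J ∪ J3set S b J ↔ factOf t n ∈ J :=
  or_iff_left factOf_notMem_J3set

theorem notMem_of_triple_mem_J3set {x p y z : Dom} (h : Fact.triple x p y ∈ J3set S b J) :
    Fact.triple x p z ∉ J := by
  obtain ⟨T, n, -, tc, -, -, hnone, heq⟩ := h
  cases heq
  exact fun hz => hnone ⟨z, hz⟩

theorem IsPreModel.eq_of_triple_mem_J3set (hJ : IsPreModel S J) {T : Shape} {x p y : Dom}
    (hx : Fact.shape T x ∈ J) (h : Fact.triple x p y ∈ J3set S b J) : y = b T p := by
  obtain ⟨T', n, hn, tc, -, -, -, heq⟩ := h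
  cases heq
  rw [hJ.shape_unique hx hn]

theorem IsPreModel.target_mem_J1set (hJ : IsPreModel S J) {T : Shape} {tc : TC Dom Shape}
    (htc : tc ∈ S.δ T) {x y : Dom} (hx : Fact.shape T x ∈ J)
    (h : Fact.triple x tc.prop y ∈ J3set S b J) : factOf tc.target y ∈ J1set S b := by
  obtain ⟨T', n, hn, tc', htc', hμ, -, heq⟩ := h
  obtain ⟨rfl, hprop, rfl⟩ := Fact.triple.inj heq
  obtain rfl := hJ.shape_unique hx hn
  obtain rfl := S.uniqueProp T tc htc tc' htc' hprop
  exact ⟨T, tc, htc, hμ, rfl⟩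

theorem IsPreModel.satSigma_union_J3set (hJ : IsPreModel S J) (hb : J1set S b ⊆ J) :
    satSigma D S (J ∪ J3set S b J) := by
  have shape_mem {T : Shape} {x : Dom} (h : Fact.shape T x ∈ J ∪ J3set S b J) :
      Fact.shape T x ∈ J := factOf_mem_union_J3set_iff (t := some T) |>.1 h
  refine ⟨fun T n h => hJ.shape_sort (shape_mem h),
    fun n h => hJ.lit_sort (factOf_mem_union_J3set_iff (t := none) |>.1 h),
    fun T tc htc => ⟨?target, ?atLeastOne, ?atMostOne⟩⟩
  case target =>
    rintro x y hx (hxy | hxy)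
    · exact Or.inl (hJ.target_mem htc (shape_mem hx) hxy)
    · exact Or.inl (hb (hJ.target_mem_J1set htc (shape_mem hx) hxy))
  case atLeastOne =>
    intro hμ x hx
    by_cases h : ∃ y, Fact.triple x tc.prop y ∈ J
    · exact h.imp fun y hy => Or.inl hy
    · exact ⟨b T tc.prop, Or.inr ⟨T, x, shape_mem hx, tc, htc, hμ, h, rfl⟩⟩
  case atMostOne =>
    rintro hμ x y z hx (hy | hy) (hz | hz)
    · exact hJ.object_unique htc hμ (shape_mem hx) hy hz
    · exact absurd hy (notMem_of_triple_mem_J3set hz)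
    · exact absurd hz (notMem_of_triple_mem_J3set hy)
    · rw [hJ.eq_of_triple_mem_J3set (shape_mem hx) hy, hJ.eq_of_triple_mem_J3set (shape_mem hx) hz]

end MandatoryTriples

section Witnesses

variable {D : RDFDom Dom} {S : ShEx Dom Shape D} {b : Shape → Dom → Dom}

theorem ShEx.exists_apply_prop_eq (S : ShEx Dom Shape D) {α : Type*} [Nonempty α]
    (c : TC Dom Shape → α) : ∃ b : Shape → Dom → α, ∀ T, ∀ tc ∈ S.δ T, b T tc.prop = c tc := by
  have pointwise (T : Shape) (p : Dom) : ∃ a, ∀ tc ∈ S.δ T, tc.prop = p → a = c tc := by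
    by_cases h : ∃ tc ∈ S.δ T, tc.prop = p
    · obtain ⟨tc, htc, rfl⟩ := h
      exact ⟨c tc, fun tc' htc' hp => congrArg c (S.uniqueProp T tc htc tc' htc' hp.symm)⟩
    · exact ⟨Classical.arbitrary α, fun tc htc hp => absurd ⟨tc, htc, hp⟩ h⟩
  choose b hb using pointwise
  exact ⟨b, fun T tc htc => hb T tc.prop tc htc rfl⟩

theorem triple_notMem_J1set {s p o : Dom} : Fact.triple s p o ∉ J1set S b := by
  rintro ⟨T, tc, -, -, h⟩
  exact triple_ne_factOf h

variable {c : Option Shape → Dom}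

theorem eq_of_factOf_mem_J1set (hb : ∀ T, ∀ tc ∈ S.δ T, b T tc.prop = c tc.target)
    {t : Option Shape} {n : Dom} (h : factOf t n ∈ J1set S b) : n = c t := by
  obtain ⟨T, tc, htc, -, h⟩ := h
  obtain ⟨rfl, rfl⟩ := factOf_inj.1 h
  exact hb T tc htc

theorem isPreModel_J1set (hb : ∀ T, ∀ tc ∈ S.δ T, b T tc.prop = c tc.target)
    (hlit : c none ∈ D.Lit) (hshape : ∀ T, c (some T) ∈ D.Iri ∪ D.Blank)
    (hinj : Function.Injective fun T => c (some T)) : IsPreModel S (J1set S b) where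
  shape_sort {T _} h := eq_of_factOf_mem_J1set (t := some T) hb h ▸ hshape T
  lit_sort h := eq_of_factOf_mem_J1set (t := none) hb h ▸ hlit
  shape_unique {T T' _} h h' := hinj <|
    (eq_of_factOf_mem_J1set (t := some T) hb h).symm.trans
      (eq_of_factOf_mem_J1set (t := some T') hb h')
  target_mem _ _ h := absurd h triple_notMem_J1set
  object_unique _ _ _ h := absurd h triple_notMem_J1set

theorem subjects_J1set_subset (hb : ∀ T, ∀ tc ∈ S.δ T, b T tc.prop = c tc.target) :
    subjects (J1set S b) ⊆ Set.range fun T => c (some T) := by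
  rintro x (⟨T, h⟩ | ⟨p, y, h⟩)
  · exact ⟨T, (eq_of_factOf_mem_J1set (t := some T) hb h).symm⟩
  · exact absurd h triple_notMem_J1set

theorem exists_injective_forall_mem {α β : Type*} [Countable α] {s : Set β} (hs : s.Infinite) :
    ∃ f : α → β, Function.Injective f ∧ ∀ a, f a ∈ s := by
  obtain ⟨g, hg⟩ := exists_injective_nat α
  exact ⟨fun a => hs.natEmbedding s (g a),
    Subtype.val_injective.comp ((hs.natEmbedding s).injective.comp hg), fun a => Subtype.prop _⟩

theorem exists_isPreModel_J1set [Countable Shape] (S : ShEx Dom Shape D) :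
    ∃ b, IsPreModel S (J1set S b) ∧ subjects (J1set S b) ⊆ D.Blank := by
  obtain ⟨blank, hinj, hblank⟩ := exists_injective_forall_mem (α := Shape) D.infBlank
  obtain ⟨l, hl⟩ := D.infNull.nonempty
  have : Nonempty Dom := ⟨l⟩
  obtain ⟨b, hb⟩ := S.exists_apply_prop_eq fun tc => tc.target.elim l blank
  refine ⟨b, isPreModel_J1set (c := (Option.elim · l blank)) hb (D.nullSub hl)
    (fun T => Or.inr (hblank T)) hinj, ?_⟩
  exact (subjects_J1set_subset (c := (Option.elim · l blank)) hb).trans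
    (Set.range_subset_iff.2 hblank)

theorem IsPreModel.exists_superset_satSigma [Countable Shape] {J : Set (Fact Dom Shape)}
    (hJ : IsPreModel S J) (hblank : Disjoint (subjects J) D.Blank) :
    ∃ J', J ⊆ J' ∧ satSigma D S J' := by
  obtain ⟨b, hJ1, hsub⟩ := exists_isPreModel_J1set S
  have hunion : IsPreModel S (J ∪ J1set S b) := hJ.union hJ1 (hblank.mono_right hsub)
  exact ⟨_, Set.subset_union_left.trans Set.subset_union_left,
    hunion.satSigma_union_J3set Set.subset_union_right⟩

end Witnesses

section Canonical

variable {des : DES Dom RSym FSym Shape ar far} {I : Set (RelFact Dom RSym ar)}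
  {σ : Std Dom RSym FSym ar far}

theorem DES.Fint_eq_Fint_iff (des : DES Dom RSym FSym Shape ar far) {f g : FSym}
    {a : Fin (far f) → Dom} {a' : Fin (far g) → Dom} :
    des.Fint f a = des.Fint g a' ↔ f = g ∧ a ≍ a' := by
  refine ⟨fun h => ?_, by rintro ⟨rfl, ⟨⟩⟩; rfl⟩
  obtain rfl : f = g := by_contra fun hfg => des.FintDisj f g hfg a a' h
  exact ⟨rfl, heq_of_eq (des.FintInj f h)⟩

theorem exists_eval_eq_of_objType_eq_some {ftype : FSym → Shape} {T : Shape}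
    (h : σ.objType ftype = some T) (Fint : (f : FSym) → (Fin (far f) → Dom) → Dom)
    (ν : σ.Var → Dom) : ∃ g a, ftype g = T ∧ σ.obj.eval Fint ν = Fint g a := by
  unfold Std.objType at h
  cases hobj : σ.obj with
  | var v => simp [hobj] at h
  | app g z => exact ⟨g, fun i => ν (z i), by simpa [hobj] using h, rfl⟩

theorem exists_eval_eq_of_objType_eq_none {ftype : FSym → Shape}
    (h : σ.objType ftype = none) (Fint : (f : FSym) → (Fin (far f) → Dom) → Dom)
    (ν : σ.Var → Dom) : ∃ v, σ.obj.eval Fint ν = ν v := by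
  unfold Std.objType at h
  cases hobj : σ.obj with
  | var v => exact ⟨v, rfl⟩
  | app g z => simp [hobj] at h

theorem bodyHolds.apply_mem {ν : σ.Var → Dom} (hν : bodyHolds σ ν I) {A : Set Dom}
    (hI : ∀ F ∈ I, ∀ i, F.args i ∈ A) (v : σ.Var) : ν v ∈ A := by
  obtain ⟨a, ha, i, rfl⟩ := σ.covers v
  exact hI _ (hν a ha) i

theorem stdSat_canonical (hσ : σ ∈ des.stds) :
    stdSat des.Fint des.ftype σ I (canonical des I) := fun ν hν =>
  ⟨⟨σ, hσ, ν, hν, Or.inl rfl⟩, ⟨σ, hσ, ν, hν, Or.inr (Or.inl rfl)⟩,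
    ⟨σ, hσ, ν, hν, Or.inr (Or.inr rfl)⟩⟩

theorem stdSat.mono {Fint : (f : FSym) → (Fin (far f) → Dom) → Dom} {ftype : FSym → Shape}
    {J J' : Set (Fact Dom Shape)} (h : stdSat Fint ftype σ I J) (hJ : J ⊆ J') :
    stdSat Fint ftype σ I J' := fun ν hν =>
  (h ν hν).imp (@hJ _) (And.imp (@hJ _) (@hJ _))

theorem triple_mem_canonical_iff {s p o : Dom} :
    Fact.triple s p o ∈ canonical des I ↔ ∃ σ ∈ des.stds, ∃ ν : σ.Var → Dom, bodyHolds σ ν I ∧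
      s = des.Fint σ.f (fun i => ν (Sum.inl i)) ∧ p = σ.p ∧ o = σ.obj.eval des.Fint ν := by
  simp only [canonical, Set.mem_ofPred_eq, Fact.triple.injEq, reduceCtorEq, triple_ne_factOf,
    or_false]

theorem exists_Fint_eq_of_shape_mem_canonical {T : Shape} {n : Dom}
    (h : Fact.shape T n ∈ canonical des I) : ∃ f a, des.ftype f = T ∧ n = des.Fint f a := by
  obtain ⟨σ, -, ν, -, h | h | h⟩ := h
  · cases h
  · cases h
    exact ⟨_, _, rfl, rfl⟩
  · obtain ⟨hT, rfl⟩ := (factOf_inj (t := some T)).1 h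
    exact exists_eval_eq_of_objType_eq_some hT.symm des.Fint ν

theorem mem_Lit_of_lit_mem_canonical (hI : validInst des.D des.fds I) {n : Dom}
    (h : Fact.lit n ∈ canonical des I) : n ∈ des.D.Lit := by
  obtain ⟨σ, -, ν, hν, h | h | h⟩ := h
  · cases h
  · cases h
  · obtain ⟨hT, rfl⟩ := (factOf_inj (t := none)).1 h
    obtain ⟨v, hv⟩ := exists_eval_eq_of_objType_eq_none hT.symm des.Fint ν
    exact hv ▸ (hν.apply_mem hI.2.1 v).1

theorem subjects_canonical_subset_Iri : subjects (canonical des I) ⊆ des.D.Iri := by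
  rintro x (⟨T, h⟩ | ⟨p, y, h⟩)
  · obtain ⟨f, a, -, rfl⟩ := exists_Fint_eq_of_shape_mem_canonical h
    exact des.FintIri f a
  · obtain ⟨σ, -, ν, -, rfl, -⟩ := triple_mem_canonical_iff.1 h
    exact des.FintIri _ _

theorem eq_ftype_of_shape_Fint_mem_canonical {T : Shape} {f : FSym} {a : Fin (far f) → Dom}
    (h : Fact.shape T (des.Fint f a) ∈ canonical des I) : T = des.ftype f := by
  obtain ⟨g, a', rfl, heq⟩ := exists_Fint_eq_of_shape_mem_canonical h
  rw [(des.Fint_eq_Fint_iff.1 heq).1]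

theorem isPreModel_canonical (hkc : keyCovered des) (hI : validInst des.D des.fds I) :
    IsPreModel des.shex (canonical des I) where
  shape_sort {T _} h := Or.inl (subjects_canonical_subset_Iri (Or.inl ⟨T, h⟩))
  lit_sort := mem_Lit_of_lit_mem_canonical hI
  shape_unique := by
    intro T T' n h h'
    obtain ⟨f, a, rfl, rfl⟩ := exists_Fint_eq_of_shape_mem_canonical h
    exact (eq_ftype_of_shape_Fint_mem_canonical h').symm
  target_mem := by
    intro T tc x y htc hx hxy
    obtain ⟨σ, hσ, ν, hν, rfl, hp, rfl⟩ := triple_mem_canonical_iff.1 hxy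
    obtain rfl := eq_ftype_of_shape_Fint_mem_canonical hx
    rw [des.stConf σ hσ tc htc hp]
    exact (stdSat_canonical hσ ν hν).2.2
  object_unique := by
    intro T tc x y z htc hμ hx hxy hxz
    obtain ⟨σ₁, hσ₁, ν₁, hν₁, rfl, hp₁, rfl⟩ := triple_mem_canonical_iff.1 hxy
    obtain ⟨σ₂, hσ₂, ν₂, hν₂, hsubj, hp₂, rfl⟩ := triple_mem_canonical_iff.1 hxz
    obtain rfl := eq_ftype_of_shape_Fint_mem_canonical hx
    obtain ⟨hf, hargs⟩ := des.Fint_eq_Fint_iff.1 hsubj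
    have hcont : contentious des σ₁ σ₂ := ⟨hσ₁, hσ₂, hf, hp₁.symm.trans hp₂, tc, htc, hp₁,
      des.stConf σ₁ hσ₁ tc htc hp₁, hμ⟩
    exact hkc σ₁ σ₂ hcont I hI ν₁ ν₂ hν₁ hν₂ hargs

end Canonical

theorem stmt3_general [Countable Shape] (des : DES Dom RSym FSym Shape ar far)
    (hkc : keyCovered des) : consistent des := by
  intro I hI
  have hfresh : Disjoint (subjects (canonical des I)) des.D.Blank :=
    des.D.disjIB.mono_left subjects_canonical_subset_Iri
  obtain ⟨J, hJ, hsat⟩ := (isPreModel_canonical hkc hI).exists_superset_satSigma hfresh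
  exact ⟨J, fun σ hσ => (stdSat_canonical hσ).mono hJ, hsat⟩

theorem stmt3 [Countable Dom] [Finite RSym] [Finite FSym] [Finite Shape]
    (des : DES Dom RSym FSym Shape ar far)
    (hkc : keyCovered des) : consistent des :=
  stmt3_general des hkc

end RdfDE
end

section
/- Let DES = (R, S, Σ_st, F, F_int) be a fully-typed data exchange setting that is key-covered, let I be a valid instance of R, and let J_0 be the canonical target instance of I (the set of all facts Triple(f^{F_int}(ν(x)), p, ν^{F_int}(o)), T_s(f^{F_int}(ν(x))), T_o(ν^{F_int}(o)) over all stds σ ∈ Σ_st and all valuations ν mapping every atom of the body of σ to a fact of I). Then J_0 satisfies every sentence mult≤1(T, p) of Σ_S; that is, for every T ∈ T and p :: T'^μ ∈ δ(T) with μ ∈ {1, ?}, and for all a, b_1, b_2 ∈ Dom, if T(a) ∈ J_0, Triple(a, p, b_1) ∈ J_0 and Triple(a, p, b_2) ∈ J_0, then b_1 = b_2. -/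
namespace RdfDE

variable {Dom RSym FSym Shape : Type} {ar : RSym → ℕ} {far : FSym → ℕ}

variable {Dom RSym FSym Shape : Type} {ar : RSym → ℕ} {far : FSym → ℕ}

/-! The interpretations of the function symbols are jointly injective, so an IRI `f(x)` of the
canonical instance determines both `f` and `x`. Hence its only type is `type(f)`, and two triples
with this subject and the same property come from a pair of stds with subject symbol `f`, fired by
valuations that agree on `x`. An upper bound on the property makes the pair contentious, and
functional overlap identifies the two objects. -/

theorem factOf_ne_triple (t : Option Shape) (n s p o : Dom) : factOf t n ≠ .triple s p o := by
  cases t <;> simp [factOf]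

theorem factOf_eq_shape_iff {t : Option Shape} {n m : Dom} {T : Shape} :
    factOf t n = .shape T m ↔ t = some T ∧ n = m := by
  cases t <;> simp [factOf]

theorem Std.objType_eq_some_iff {ftype : FSym → Shape} {σ : Std Dom RSym FSym ar far} {T : Shape} :
    σ.objType ftype = some T ↔ ∃ g z, σ.obj = .app g z ∧ ftype g = T := by
  unfold Std.objType
  split <;> simp_all

section Canonical

variable {des : DES Dom RSym FSym Shape ar far} {I : Set (RelFact Dom RSym ar)}

theorem DES.Fint_inj {f g : FSym} {x : Fin (far f) → Dom} {y : Fin (far g) → Dom} :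
    des.Fint f x = des.Fint g y ↔ f = g ∧ x ≍ y := by
  constructor
  · intro h
    obtain rfl : f = g := by
      by_contra hfg
      exact des.FintDisj f g hfg x y h
    exact ⟨rfl, heq_of_eq (des.FintInj f h)⟩
  · rintro ⟨rfl, ⟨⟩⟩
    rfl

theorem exists_std_of_triple_mem_canonical {a p b : Dom}
    (h : Fact.triple a p b ∈ canonical des I) :
    ∃ σ ∈ des.stds, ∃ ν : σ.Var → Dom, bodyHolds σ ν I ∧
      des.Fint σ.f (fun i => ν (.inl i)) = a ∧ σ.p = p ∧ σ.obj.eval des.Fint ν = b := by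
  obtain ⟨σ, hσ, ν, hν, h | h | h⟩ := h
  · obtain ⟨rfl, rfl, rfl⟩ := Fact.triple.inj h
    exact ⟨σ, hσ, ν, hν, rfl, rfl, rfl⟩
  · cases h
  · exact (factOf_ne_triple _ _ _ _ _ h.symm).elim

theorem exists_Fint_of_shape_mem_canonical {T : Shape} {a : Dom}
    (h : Fact.shape T a ∈ canonical des I) :
    ∃ f x, des.ftype f = T ∧ des.Fint f x = a := by
  obtain ⟨σ, -, ν, -, h | h | h⟩ := h
  · cases h
  · obtain ⟨rfl, rfl⟩ := Fact.shape.inj h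
    exact ⟨_, _, rfl, rfl⟩
  · obtain ⟨hT, rfl⟩ := factOf_eq_shape_iff.mp h.symm
    obtain ⟨g, z, hobj, hg⟩ := Std.objType_eq_some_iff.mp hT
    exact ⟨g, fun i => ν (z i), hg, by rw [hobj, Obj.eval]⟩

theorem ftype_eq_of_shape_Fint_mem_canonical {T : Shape} {f : FSym} {x : Fin (far f) → Dom}
    (h : Fact.shape T (des.Fint f x) ∈ canonical des I) : des.ftype f = T := by
  obtain ⟨g, y, hT, hgy⟩ := exists_Fint_of_shape_mem_canonical h
  obtain ⟨rfl, -⟩ := DES.Fint_inj.mp hgy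
  exact hT

end Canonical

theorem stmt5_general (des : DES Dom RSym FSym Shape ar far) (hkc : keyCovered des)
    (I : Set (RelFact Dom RSym ar)) (hI : validInst des.D des.fds I) :
    ∀ T : Shape, ∀ tc ∈ des.shex.δ T, (tc.mult = Mult.one ∨ tc.mult = Mult.opt) →
      ∀ a b1 b2 : Dom, Fact.shape T a ∈ canonical des I →
        Fact.triple a tc.prop b1 ∈ canonical des I →
        Fact.triple a tc.prop b2 ∈ canonical des I → b1 = b2 := by
  intro T tc htc hmult a b1 b2 hT h1 h2
  obtain ⟨σ1, hσ1, ν1, hν1, rfl, hp1, rfl⟩ := exists_std_of_triple_mem_canonical h1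
  obtain ⟨σ2, hσ2, ν2, hν2, hsubj, hp2, rfl⟩ := exists_std_of_triple_mem_canonical h2
  obtain rfl := ftype_eq_of_shape_Fint_mem_canonical hT
  obtain ⟨hf, hx⟩ := DES.Fint_inj.mp hsubj.symm
  have hcont : contentious des σ1 σ2 :=
    ⟨hσ1, hσ2, hf, hp1.trans hp2.symm, tc, htc, hp1.symm,
      des.stConf σ1 hσ1 tc htc hp1.symm, hmult⟩
  exact hkc σ1 σ2 hcont I hI ν1 ν2 hν1 hν2 hx

theorem stmt5 [Countable Dom] [Finite RSym] [Finite FSym] [Finite Shape]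
    (des : DES Dom RSym FSym Shape ar far)
    (hkc : keyCovered des)
    (I : Set (RelFact Dom RSym ar)) (hI : validInst des.D des.fds I) :
    ∀ T : Shape, ∀ tc ∈ des.shex.δ T, (tc.mult = Mult.one ∨ tc.mult = Mult.opt) →
      ∀ a b1 b2 : Dom, Fact.shape T a ∈ canonical des I →
        Fact.triple a tc.prop b1 ∈ canonical des I →
        Fact.triple a tc.prop b2 ∈ canonical des I → b1 = b2 :=
  stmt5_general des hkc I hI

end RdfDE
end

section
/- Let DES = (R, S, Σ_st, F, F_int) be a fully-typed data exchange setting such that for every contentious pair of stds σ_1, σ_2 in Σ_st, the object terms o_1 and o_2 are either both variables or both functional terms over the same function symbol g. For each such contentious pair, let z (resp. z') be the vector of variables of o_1 (resp. o_2), of common length n, and let m = |x_1| = |x_2|; define the (m+n)-ary queries V_{σ_1}(x, z) = ∃(y_1 \ z). φ_1(x, y_1) and V_{σ_2}(x, z') = ∃(y_2 \ z'). φ_2(x, y_2), the query V_{σ_1,σ_2} = V_{σ_1} ∪ V_{σ_2}, and the functional dependency fd_{σ_1,σ_2} : {1,…,m} → {m+1,…,m+n} on V_{σ_1,σ_2}.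 Then DES is key-covered if and only if for every valid instance I of R and every contentious pair σ_1, σ_2 of Σ_st, the relation V_{σ_1,σ_2}(I) (the set of tuples (a, b) ∈ Dom^{m+n} such that V_{σ_1}(a, b) or V_{σ_2}(a, b) holds in I) satisfies fd_{σ_1,σ_2}. -/
namespace RdfDE

variable {Dom RSym FSym Shape : Type} {ar : RSym → ℕ} {far : FSym → ℕ}

variable {Dom RSym FSym Shape : Type} {ar : RSym → ℕ} {far : FSym → ℕ}

/-!
Since the interpretations of function symbols are injective, two matching object terms take the
same value exactly when their tuples of variables do. So two stds overlap functionally iff the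
functional dependency holds *across* their views: a tuple of one and a tuple of the other agreeing
on `x` agree on `z`. On the union of two views the dependency also compares tuples of the same view;
this is covered because if `σ1, σ2` is contentious then so are `σ1, σ1` and `σ2, σ2`.
-/

section FdBetween

variable {α β : Type*} {R S : Set (α × β)}

/-- The functional dependency from first to second components, tested only between a pair of `R`
and a pair of `S`. `FdBetween R R` is the usual functional dependency on `R`. -/
def FdBetween (R S : Set (α × β)) : Prop :=
  ∀ ab ∈ R, ∀ ab' ∈ S, ab.1 = ab'.1 → ab.2 = ab'.2

theorem FdBetween.symm (h : FdBetween R S) : FdBetween S R :=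
  fun ab hab ab' hab' heq => (h ab' hab' ab hab heq.symm).symm

theorem fdBetween_union_self_iff :
    FdBetween (R ∪ S) (R ∪ S) ↔ FdBetween R R ∧ FdBetween R S ∧ FdBetween S S := by
  constructor
  · intro h
    exact ⟨fun ab hab ab' hab' => h ab (.inl hab) ab' (.inl hab'),
      fun ab hab ab' hab' => h ab (.inl hab) ab' (.inr hab'),
      fun ab hab ab' hab' => h ab (.inr hab) ab' (.inr hab')⟩
  · rintro ⟨hR, hRS, hS⟩ ab (hab | hab) ab' (hab' | hab')
    · exact hR ab hab ab' hab'
    · exact hRS ab hab ab' hab'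
    · exact hRS.symm ab hab ab' hab'
    · exact hS ab hab ab' hab'

end FdBetween

theorem heq_iff_ofFn_eq_ofFn {α : Type*} {n m : ℕ} (h : n = m) {a : Fin n → α} {b : Fin m → α} :
    HEq a b ↔ List.ofFn a = List.ofFn b := by
  subst h
  rw [heq_iff_eq, List.ofFn_inj]

section ObjectTerms

variable {σ σ1 σ2 : Std Dom RSym FSym ar far}

theorem ofFn_objVars_of_obj_eq_var {v : σ.Var} (h : σ.obj = .var v) (ν : σ.Var → Dom) :
    List.ofFn (fun j => ν (σ.objVars.2 j)) = [ν v] := by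
  have hvars : σ.objVars = ⟨1, fun _ => v⟩ := by simp only [Std.objVars, h]
  rw [hvars, List.ofFn_succ, List.ofFn_zero]

theorem ofFn_objVars_of_obj_eq_app {g : FSym} {z : Fin (far g) → σ.Var} (h : σ.obj = .app g z)
    (ν : σ.Var → Dom) :
    List.ofFn (fun j => ν (σ.objVars.2 j)) = List.ofFn (fun j => ν (z j)) := by
  have hvars : σ.objVars = ⟨far g, z⟩ := by simp only [Std.objVars, h]
  rw [hvars]

theorem objMatch.eval_eq_eval_iff {Fint : (f : FSym) → (Fin (far f) → Dom) → Dom}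
    (hFint : ∀ f, Function.Injective (Fint f)) (h : objMatch σ1 σ2)
    (ν1 : σ1.Var → Dom) (ν2 : σ2.Var → Dom) :
    Obj.eval Fint ν1 σ1.obj = Obj.eval Fint ν2 σ2.obj ↔
      List.ofFn (fun j => ν1 (σ1.objVars.2 j)) = List.ofFn (fun j => ν2 (σ2.objVars.2 j)) := by
  rcases h with ⟨v1, v2, h1, h2⟩ | ⟨g, z1, z2, h1, h2⟩
  · rw [h1, h2, ofFn_objVars_of_obj_eq_var h1, ofFn_objVars_of_obj_eq_var h2, List.singleton_inj]
    rfl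
  · rw [h1, h2, ofFn_objVars_of_obj_eq_app h1, ofFn_objVars_of_obj_eq_app h2, List.ofFn_inj]
    exact (hFint g).eq_iff

end ObjectTerms

section Contentious

variable {des : DES Dom RSym FSym Shape ar far} {σ1 σ2 : Std Dom RSym FSym ar far}

theorem contentious.symm (h : contentious des σ1 σ2) : contentious des σ2 σ1 := by
  obtain ⟨h1, h2, hf, hp, tc, htc, hprop, -, hmult⟩ := h
  rw [hf] at htc
  exact ⟨h2, h1, hf.symm, hp.symm, tc, htc, hprop.trans hp,
    des.stConf σ2 h2 tc htc (hprop.trans hp), hmult⟩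

theorem contentious.self_left (h : contentious des σ1 σ2) : contentious des σ1 σ1 := by
  obtain ⟨h1, -, -, -, hconstraint⟩ := h
  exact ⟨h1, h1, rfl, rfl, hconstraint⟩

theorem funOverlap_iff_fdBetween_viewRel (hfar : far σ1.f = far σ2.f) (hobj : objMatch σ1 σ2) :
    funOverlap des σ1 σ2 ↔ ∀ I : Set (RelFact Dom RSym ar), validInst des.D des.fds I →
      FdBetween (viewRel σ1 I) (viewRel σ2 I) := by
  constructor
  · rintro h I hI ⟨_, _⟩ ⟨ν1, hν1, rfl, rfl⟩ ⟨_, _⟩ ⟨ν2, hν2, rfl, rfl⟩ hx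
    exact (hobj.eval_eq_eval_iff des.FintInj ν1 ν2).1
      (h I hI ν1 ν2 hν1 hν2 ((heq_iff_ofFn_eq_ofFn hfar).2 hx))
  · intro h I hI ν1 ν2 hν1 hν2 hx
    exact (hobj.eval_eq_eval_iff des.FintInj ν1 ν2).2
      (h I hI (_, _) ⟨ν1, hν1, rfl, rfl⟩ (_, _) ⟨ν2, hν2, rfl, rfl⟩
        ((heq_iff_ofFn_eq_ofFn hfar).1 hx))

end Contentious

theorem stmt8_general (des : DES Dom RSym FSym Shape ar far)
    (hmatch : ∀ σ1 σ2, contentious des σ1 σ2 → objMatch σ1 σ2) :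
    keyCovered des ↔
      ∀ I : Set (RelFact Dom RSym ar), validInst des.D des.fds I →
        ∀ σ1 σ2, contentious des σ1 σ2 →
          ∀ ab ∈ viewRel σ1 I ∪ viewRel σ2 I, ∀ ab' ∈ viewRel σ1 I ∪ viewRel σ2 I,
            ab.1 = ab'.1 → ab.2 = ab'.2 := by
  have overlap_iff : ∀ {σ1 σ2}, contentious des σ1 σ2 → (funOverlap des σ1 σ2 ↔
      ∀ I, validInst des.D des.fds I → FdBetween (viewRel σ1 I) (viewRel σ2 I)) :=
    fun hc => funOverlap_iff_fdBetween_viewRel (congrArg far hc.2.2.1) (hmatch _ _ hc)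
  constructor
  · intro hkey I hI σ1 σ2 hc
    have fd_between : ∀ {τ1 τ2}, contentious des τ1 τ2 →
        FdBetween (viewRel τ1 I) (viewRel τ2 I) :=
      fun hτ => (overlap_iff hτ).1 (hkey _ _ hτ) I hI
    exact fdBetween_union_self_iff.2
      ⟨fd_between hc.self_left, fd_between hc, fd_between hc.symm.self_left⟩
  · intro hfd σ1 σ2 hc
    exact (overlap_iff hc).2 fun I hI =>
      (fdBetween_union_self_iff.1 (hfd I hI σ1 σ2 hc)).2.1

theorem stmt8 [Countable Dom] [Finite RSym] [Finite FSym] [Finite Shape]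
    (des : DES Dom RSym FSym Shape ar far)
    (hmatch : ∀ σ1 σ2, contentious des σ1 σ2 → objMatch σ1 σ2) :
    keyCovered des ↔
      ∀ I : Set (RelFact Dom RSym ar), validInst des.D des.fds I →
        ∀ σ1 σ2, contentious des σ1 σ2 →
          ∀ ab ∈ viewRel σ1 I ∪ viewRel σ2 I, ∀ ab' ∈ viewRel σ1 I ∪ viewRel σ2 I,
            ab.1 = ab'.1 → ab.2 = ab'.2 :=
  stmt8_general des hmatch

end RdfDE
end
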